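/- Assume V ∈ C¹(ℝ^N), c ∈ ℝ, condition (V^c) and the coercivity condition (1.7), and let q ∈ ℳ_c. (i) If ω_q = +∞, then q̇(t) → 0 as t → +∞ and the ω-limit set Ω_q := ⋂_{t>α_q} closure{q(s) : s ≥ t} is a closed connected subset of 𝒱^c₊ ∩ {ξ ∈ ℝ^N : V(ξ) = c and ∇V(ξ) = 0}. (ii) If α_q = −∞, then q̇(t) → 0 as t → −∞ and the α-limit set 𝒜_q := ⋂_{t<ω_q} closure{q(s) : s ≤ t} is a closed connected subset of 𝒱^c₋ ∩ {ξ ∈ ℝ^N : V(ξ) = c and ∇V(ξ) = 0}. -/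

import Mathlib

open MeasureTheory Filter Metric Set Topology
open scoped ENNReal

noncomputable section

abbrev Euc (N : ℕ) := EuclideanSpace ℝ (Fin N)

def setDist {E : Type*} [PseudoMetricSpace E] (A B : Set E) : ℝ :=
  sInf ((fun p : E × E => dist p.1 p.2) '' (A ×ˢ B))

def IsH1loc {N : ℕ} (q q' : ℝ → Euc N) : Prop :=
  LocallyIntegrable q' volume ∧
  (∀ a b : ℝ, IntegrableOn (fun t => ‖q' t‖ ^ 2) (Icc a b) volume) ∧
  (∀ a b : ℝ, q b - q a = ∫ t in a..b, q' t)

def lagJ {N : ℕ} (V : Euc N → ℝ) (c : ℝ) (q q' : ℝ → Euc N) (I : Set ℝ) : ℝ≥0∞ :=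
  ∫⁻ t in I, ENNReal.ofReal (2⁻¹ * ‖q' t‖ ^ 2 + (V (q t) - c))

def Gamma {N : ℕ} (V : Euc N → ℝ) (c : ℝ) (Vm Vp : Set (Euc N)) :
    Set ((ℝ → Euc N) × (ℝ → Euc N)) :=
  {p | IsH1loc p.1 p.2 ∧ (∀ t, c ≤ V (p.1 t)) ∧
    (∀ ε > 0, ∃ᶠ t in atBot, infDist (p.1 t) Vm < ε) ∧
    (∀ ε > 0, ∃ᶠ t in atTop, infDist (p.1 t) Vp < ε)}

def mc {N : ℕ} (V : Euc N → ℝ) (c : ℝ) (Vm Vp : Set (Euc N)) : ℝ≥0∞ :=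
  ⨅ (p) (_ : p ∈ Gamma V c Vm Vp), lagJ V c p.1 p.2 univ

def Coercive {N : ℕ} (V : Euc N → ℝ) (c : ℝ) (Vm Vp : Set (Euc N)) (R : ℝ) : Prop :=
  mc V c Vm Vp =
    ⨅ (p) (_ : p ∈ Gamma V c Vm Vp) (_ : ∀ t, ‖p.1 t‖ ≤ R), lagJ V c p.1 p.2 univ

/-- `ρ₀ := (1/4)·dist(𝒱⁻ ∩ B̄_R(0), 𝒱⁺ ∩ B̄_R(0))`. -/
def rho0 {N : ℕ} (Vm Vp : Set (Euc N)) (R : ℝ) : ℝ :=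
  (1 / 4) * setDist (Vm ∩ closedBall 0 R) (Vp ∩ closedBall 0 R)

/-- membership in `ℳ_c`. -/
def MemM {N : ℕ} (V : Euc N → ℝ) (c : ℝ) (Vm Vp : Set (Euc N)) (R : ℝ)
    (q q' : ℝ → Euc N) : Prop :=
  (q, q') ∈ Gamma V c Vm Vp ∧
  infDist (q 0) {x | V x ≤ c} = rho0 Vm Vp R ∧
  lagJ V c q q' univ = mc V c Vm Vp ∧
  (∀ t, ‖q t‖ ≤ R)

/-- `α_q` (valued in `[-∞,+∞]`, with `−∞` when `q(ℝ) ∩ 𝒱⁻ = ∅`). -/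
def alphaQ {N : ℕ} (Vm : Set (Euc N)) (q : ℝ → Euc N) : EReal :=
  sSup {x : EReal | ∃ t : ℝ, x = (t : EReal) ∧ q t ∈ Vm}

/-- `ω_q` (valued in `[-∞,+∞]`, with `+∞` when there is no `t > α_q` with `q(t) ∈ 𝒱⁺`). -/
def omegaQ {N : ℕ} (Vm Vp : Set (Euc N)) (q : ℝ → Euc N) : EReal :=
  sInf {x : EReal | ∃ t : ℝ, x = (t : EReal) ∧ alphaQ Vm q < (t : EReal) ∧ q t ∈ Vp}

/-- reflection of `q` with respect to `b` (used for `t > b`). -/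
def reflPlus {N : ℕ} (q : ℝ → Euc N) (b : ℝ) : ℝ → Euc N :=
  fun t => if t ≤ b then q t else q (2 * b - t)

/-- reflection of `q` with respect to `a` (used for `t < a`). -/
def reflMinus {N : ℕ} (q : ℝ → Euc N) (a : ℝ) : ℝ → Euc N :=
  fun t => if a ≤ t then q t else q (2 * a - t)

/-- ω-limit set `Ω_q := ⋂_{t > α_q} closure {q(s) : s ≥ t}`. -/
def omegaLimitSet {N : ℕ} (Vm : Set (Euc N)) (q : ℝ → Euc N) : Set (Euc N) :=
  ⋂ (t : ℝ) (_ : alphaQ Vm q < (t : EReal)), closure (q '' Ici t)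

/-- α-limit set `𝒜_q := ⋂_{t < ω_q} closure {q(s) : s ≤ t}`. -/
def alphaLimitSet {N : ℕ} (Vm Vp : Set (Euc N)) (q : ℝ → Euc N) : Set (Euc N) :=
  ⋂ (t : ℝ) (_ : (t : EReal) < omegaQ Vm Vp q), closure (q '' Iic t)

/-!
A path of `Γ_c` can be cut at two times where it is close to `𝒱₋` and `𝒱₊` and joined to these sets
along segments on which `V ≥ c`, so `m_c < ∞` and a minimizer `q` has finite action. Hence `q` is
`1/2`-Hölder, `V ∘ q → c`, and `q(t + r) - q(t) → 0`. Where `V ∘ q > c` the path may be varied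
freely, which gives `q̈ = ∇V(q)`. A uniformly continuous derivative tends to zero as soon as the
increments of the function do: applied to `q` and then to `q̇`, this yields `q̇ → 0` and
`∇V(q) → 0`. Since `𝒱₋` and `𝒱₊` are at positive distance, the connected tail of the orbit stays
near `𝒱₊`, and cluster points of a bounded continuous path form a connected set. The behaviour at
`-∞` is that of `t ↦ q(-t)` at `+∞`, with `𝒱₋` and `𝒱₊` exchanged.
-/

section ClusterPoints

variable {ι α X Y : Type*} [TopologicalSpace X] [TopologicalSpace Y]

theorem isConnected_setOf_clusterPt [T2Space X] {F : Filter X} [F.NeBot] {p : ι → Prop}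
    {s : ι → Set X} (hF : F.HasBasis p s) (hs : ∀ i, p i → IsPreconnected (s i)) {K : Set X}
    (hK : IsCompact K) (hKF : K ∈ F) : IsConnected {x | ClusterPt x F} := by
  have hKle : F ≤ 𝓟 K := le_principal_iff.2 hKF
  obtain ⟨x₀, -, hx₀⟩ := hK hKle
  have hclosed : IsClosed {x | ClusterPt x F} := isClosed_setOfPred_clusterPt
  have hsub : {x | ClusterPt x F} ⊆ K := fun x hx =>
    hK.isClosed.closure_eq ▸ mem_closure_iff_clusterPt.2 (hx.mono hKle)
  have hcompact : IsCompact {x | ClusterPt x F} := hK.of_isClosed_subset hclosed hsub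
  refine ⟨⟨x₀, hx₀⟩, (isPreconnected_iff_subset_of_fully_disjoint_closed hclosed).2 ?_⟩
  intro u v hu hv hcover huv
  obtain ⟨U, W, hU, hW, huU, hvW, hUW⟩ :=
    SeparatedNhds.of_isCompact_isCompact (hcompact.inter_left hu) (hcompact.inter_left hv)
      (huv.mono inter_subset_left inter_subset_left)
  have hmem : U ∪ W ∈ F := hK.adherence_nhdset hKle (hU.union hW) fun x _ hx =>
    (hcover hx).imp (fun h => huU ⟨h, hx⟩) fun h => hvW ⟨h, hx⟩
  obtain ⟨i, hi, hsi⟩ := hF.mem_iff.1 hmem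
  have hmeets : ∀ O, IsOpen O → ∀ x ∈ O, ClusterPt x F → (O ∩ s i).Nonempty := fun O hO x hx hxF =>
    clusterPt_iff_nonempty.1 hxF (hO.mem_nhds hx) (hF.mem_of_mem hi)
  refine ((hs i hi).subset_or_subset hU hW hUW hsi).imp (fun hsU x hx => ?_) fun hsW x hx => ?_
  · refine (hcover hx).resolve_right fun hxv => ?_
    obtain ⟨y, hyW, hys⟩ := hmeets W hW x (hvW ⟨hxv, hx⟩) hx
    exact hUW.notMem_of_mem_left (hsU hys) hyW
  · refine (hcover hx).resolve_left fun hxu => ?_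
    obtain ⟨y, hyU, hys⟩ := hmeets U hU x (huU ⟨hxu, hx⟩) hx
    exact hUW.notMem_of_mem_left hyU (hsW hys)

theorem isConnected_setOf_mapClusterPt_atTop [T2Space X] {q : ℝ → X} (hq : Continuous q)
    {K : Set X} (hK : IsCompact K) (hqK : ∀ᶠ t in atTop, q t ∈ K) :
    IsConnected {x | MapClusterPt x atTop q} :=
  isConnected_setOf_clusterPt (atTop_basis.map q)
    (fun _ _ => isPreconnected_Ici.image q hq.continuousOn) hK hqK

theorem eq_of_mapClusterPt_of_tendsto_comp [T2Space Y] {l : Filter α} {q : α → X} {g : X → Y}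
    {x : X} {y : Y} (hx : MapClusterPt x l q) (hg : ContinuousAt g x)
    (h : Tendsto (fun t => g (q t)) l (𝓝 y)) : g x = y := by
  have hgx : ClusterPt (g x) (𝓝 y) := (hx.continuousAt_comp hg).clusterPt.mono h
  exact eq_of_nhds_neBot hgx

theorem eventually_mem_of_tendsto_comp [T2Space Y] {l : Filter α} {q : α → X} {g : X → Y}
    {y : Y} {K U : Set X} (hK : IsCompact K) (hqK : ∀ᶠ t in l, q t ∈ K) (hg : Continuous g)
    (h : Tendsto (fun t => g (q t)) l (𝓝 y)) (hU : IsOpen U) (hyU : g ⁻¹' {y} ⊆ U) :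
    ∀ᶠ t in l, q t ∈ U :=
  hK.adherence_nhdset (f := map q l) (le_principal_iff.2 hqK) hU fun _ _ hx =>
    hyU (eq_of_mapClusterPt_of_tendsto_comp hx hg.continuousAt h)

end ClusterPoints

section Asymptotics

variable {E : Type*} [NormedAddCommGroup E] [NormedSpace ℝ E]

theorem tendsto_deriv_zero_of_tendsto_increment {f f' : ℝ → E} {T : ℝ}
    (hf : ∀ t ≥ T, HasDerivAt f (f' t) t) (hf' : UniformContinuousOn f' (Ici T))
    (h : ∀ r > 0, Tendsto (fun t => f (t + r) - f t) atTop (𝓝 0)) :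
    Tendsto f' atTop (𝓝 0) := by
  rw [Metric.tendsto_nhds]
  intro ε hε
  obtain ⟨δ, hδ, hclose⟩ := Metric.uniformContinuousOn_iff.1 hf' (ε / 2) (half_pos hε)
  set r := δ / 2 with hr_def
  have hr : 0 < r := half_pos hδ
  filter_upwards [eventually_ge_atTop T,
    (Metric.tendsto_nhds.1 (h r hr)) (r * (ε / 2)) (by positivity)] with t ht hsmall
  have hmv : ‖(f (t + r) - (t + r) • f' t) - (f t - t • f' t)‖ ≤ ε / 2 * (t + r - t) :=
    norm_image_sub_le_of_norm_deriv_le_segment' (f := fun s => f s - s • f' t)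
      (f' := fun s => f' s - f' t)
      (fun s hs => by
        simpa only [one_smul] using ((hf s (ht.trans hs.1)).fun_sub
          ((hasDerivAt_id' s).smul_const (f' t))).hasDerivWithinAt)
      (fun s hs => by
        rw [← dist_eq_norm]
        refine (hclose s (ht.trans hs.1) t ht ?_).le
        rw [Real.dist_eq, abs_of_nonneg (sub_nonneg.2 hs.1)]
        linarith [hs.2])
      (t + r) (right_mem_Icc.2 (by linarith))
  have hbound : r * ‖f' t‖ < r * ε := by
    calc r * ‖f' t‖ = ‖(f (t + r) - f t)
          - ((f (t + r) - (t + r) • f' t) - (f t - t • f' t))‖ := by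
          rw [← abs_of_pos hr, ← Real.norm_eq_abs, ← norm_smul, Real.norm_eq_abs, abs_of_pos hr]
          congr 1
          module
      _ ≤ ‖f (t + r) - f t‖ + ε / 2 * (t + r - t) := (norm_sub_le _ _).trans (by gcongr)
      _ < r * (ε / 2) + ε / 2 * (t + r - t) := by gcongr; simpa using hsmall
      _ = r * ε := by ring
  simpa using lt_of_mul_lt_mul_left hbound hr.le

theorem tendsto_intervalIntegral_add_atTop {f : ℝ → E} {a : ℝ} (hf : IntegrableOn f (Ioi a))
    (r : ℝ) : Tendsto (fun t => ∫ s in t..t + r, f s) atTop (𝓝 0) := by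
  have hii : ∀ t, a ≤ t → IntervalIntegrable f volume a t := fun t ht =>
    (intervalIntegrable_iff_integrableOn_Ioc_of_le ht).2 (hf.mono_set Ioc_subset_Ioi_self)
  have htail := intervalIntegral_tendsto_integral_Ioi a hf tendsto_id
  have hdiff := (htail.comp (tendsto_atTop_add_const_right _ r tendsto_id)).sub htail
  rw [sub_self] at hdiff
  refine hdiff.congr' ?_
  filter_upwards [eventually_ge_atTop a, eventually_ge_atTop (a - r)] with t ht htr
  exact intervalIntegral.integral_interval_sub_left (hii _ (sub_le_iff_le_add.1 htr)) (hii t ht)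

theorem tendsto_zero_of_uniformContinuous_of_integrableOn [CompleteSpace E] {f : ℝ → E} {a : ℝ}
    (hf : UniformContinuous f) (hint : IntegrableOn f (Ioi a)) : Tendsto f atTop (𝓝 0) := by
  have hii : ∀ a b : ℝ, IntervalIntegrable f volume a b := hf.continuous.intervalIntegrable
  refine tendsto_deriv_zero_of_tendsto_increment (T := 0) (f := fun t => ∫ s in (0 : ℝ)..t, f s)
    (fun t _ => hf.continuous.integral_hasStrictDerivAt 0 t |>.hasDerivAt)
    hf.uniformContinuousOn fun r _ => ?_
  simpa only [intervalIntegral.integral_interval_sub_left (hii _ _) (hii _ _)]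
    using tendsto_intervalIntegral_add_atTop hint r

theorem uniformContinuous_comp_of_range_subset {α X Y : Type*} [UniformSpace α] [UniformSpace X]
    [UniformSpace Y] {g : X → Y} {q : α → X} {K : Set X} (hK : IsCompact K)
    (hg : ContinuousOn g K) (hq : UniformContinuous q) (hqK : ∀ t, q t ∈ K) :
    UniformContinuous fun t => g (q t) :=
  uniformContinuousOn_univ.1 <| (hK.uniformContinuousOn_of_continuous hg).comp
    (uniformContinuousOn_univ.2 hq) fun t _ => hqK t

end Asymptotics

section Calculus

theorem continuous_gradient {F : Type*} [NormedAddCommGroup F] [InnerProductSpace ℝ F]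
    [CompleteSpace F] {V : F → ℝ} (hV : ContDiff ℝ 1 V) : Continuous (gradient V) :=
  (InnerProductSpace.toDual ℝ F).symm.continuous.comp (hV.continuous_fderiv one_ne_zero)

theorem exists_hasDerivAt_hasDerivAt_eq_eq {E : Type*} [NormedAddCommGroup E] [NormedSpace ℝ E]
    [CompleteSpace E] {g : ℝ → E} (hg : Continuous g) {a b : ℝ} (hab : a ≠ b) (x y : E) :
    ∃ u u' : ℝ → E, (∀ t, HasDerivAt u (u' t) t) ∧ (∀ t, HasDerivAt u' (g t) t) ∧
      u a = x ∧ u b = y := by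
  have primitive : ∀ f : ℝ → E, Continuous f →
      ∀ t, HasDerivAt (fun t => ∫ s in a..t, f s) (f t) t :=
    fun f hf t => (hf.integral_hasStrictDerivAt a t).hasDerivAt
  set G : ℝ → E := fun t => ∫ s in a..t, g s
  have hG : ∀ t, HasDerivAt G (g t) t := primitive g hg
  have hGc : Continuous G := continuous_iff_continuousAt.2 fun t => (hG t).continuousAt
  set v : E := (b - a)⁻¹ • (y - x - ∫ s in a..b, G s)
  refine ⟨fun t => x + (t - a) • v + ∫ s in a..t, G s, fun t => v + G t, fun t => ?_,
    fun t => (hG t).const_add v, by simp, ?_⟩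
  · simpa using ((((hasDerivAt_id t).sub_const a).smul_const v).const_add x).fun_add
      (primitive G hGc t)
  · simp only [v, smul_smul, mul_inv_cancel₀ (sub_ne_zero.2 hab.symm), one_smul]
    abel

end Calculus

section IntervalIntegral

variable {E : Type*} [NormedAddCommGroup E] [NormedSpace ℝ E]

/-- The path `q` run only during `[a, b]` and kept constant before and after; used to localize
variations and to glue paths by adding them. For `b < a` it is the constant `q a`. -/
def stoppedPath {E : Type*} (a b : ℝ) (q : ℝ → E) (t : ℝ) : E := q (max a (min b t))

theorem stoppedPath_of_mem_Icc {E : Type*} (q : ℝ → E) {a b t : ℝ} (ht : t ∈ Icc a b) :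
    stoppedPath a b q t = q t := by
  rw [stoppedPath, min_eq_right ht.2, max_eq_right ht.1]

theorem stoppedPath_of_le {E : Type*} (q : ℝ → E) {a b t : ℝ} (hab : a ≤ b) (ht : t ≤ a) :
    stoppedPath a b q t = q a := by
  rw [stoppedPath, min_eq_right (ht.trans hab), max_eq_left ht]

theorem stoppedPath_of_ge {E : Type*} (q : ℝ → E) {a b t : ℝ} (hab : a ≤ b) (ht : b ≤ t) :
    stoppedPath a b q t = q b := by
  rw [stoppedPath, min_eq_left ht, max_eq_right hab]

theorem intervalIntegral_indicator_Ioc {f : ℝ → E} (a b x y : ℝ) :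
    ∫ t in x..y, (Ioc a b).indicator f t = ∫ t in max a (min b x)..max a (min b y), f t := by
  have ordered : ∀ x y : ℝ, x ≤ y → ∫ t in x..y, (Ioc a b).indicator f t =
      ∫ t in max a (min b x)..max a (min b y), f t := by
    intro x y hxy
    rw [intervalIntegral.integral_of_le hxy, intervalIntegral.integral_of_le (by gcongr),
      setIntegral_indicator measurableSet_Ioc]
    congr 2
    ext t
    simp only [mem_inter_iff, mem_Ioc, max_lt_iff, min_lt_iff, le_max_iff, le_min_iff]
    grind
  rcases le_total x y with hxy | hyx
  · exact ordered x y hxy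
  · rw [intervalIntegral.integral_symm, ordered y x hyx, intervalIntegral.integral_symm, neg_neg]

theorem norm_sq_intervalIntegral_le [CompleteSpace E] {f : ℝ → E} {a b : ℝ} (hab : a ≤ b)
    (hf : IntervalIntegrable f volume a b)
    (hf2 : IntervalIntegrable (fun t => ‖f t‖ ^ 2) volume a b) :
    ‖∫ t in a..b, f t‖ ^ 2 ≤ (b - a) * ∫ t in a..b, ‖f t‖ ^ 2 := by
  rcases hab.eq_or_lt with rfl | hlt
  · simp
  have hlen : 0 < b - a := sub_pos.2 hlt
  have jensen : ‖⨍ t in Ioc a b, f t‖ ^ 2 ≤ ⨍ t in Ioc a b, ‖f t‖ ^ 2 :=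
    ((convexOn_norm convex_univ).pow (fun _ _ => norm_nonneg _) 2).map_set_average_le
      (by fun_prop) isClosed_univ (by simpa using hlt) (by simp) (by simp) hf.1 hf2.1
  simp only [setAverage_eq, Real.volume_real_Ioc_of_le hab, norm_smul, smul_eq_mul, norm_inv,
    Real.norm_of_nonneg hlen.le, ← intervalIntegral.integral_of_le hab] at jensen
  calc ‖∫ t in a..b, f t‖ ^ 2 = (b - a) ^ 2 * ((b - a)⁻¹ * ‖∫ t in a..b, f t‖) ^ 2 := by
        field_simp
    _ ≤ (b - a) ^ 2 * ((b - a)⁻¹ * ∫ t in a..b, ‖f t‖ ^ 2) := by gcongr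
    _ = (b - a) * ∫ t in a..b, ‖f t‖ ^ 2 := by field_simp

end IntervalIntegral

namespace IsH1loc

open scoped RealInnerProductSpace

variable {N : ℕ} {q q' p p' : ℝ → Euc N}

theorem intervalIntegrable (h : IsH1loc q q') (a b : ℝ) : IntervalIntegrable q' volume a b :=
  (h.1.integrableOn_isCompact isCompact_uIcc).intervalIntegrable

theorem intervalIntegrable_norm_sq (h : IsH1loc q q') (a b : ℝ) :
    IntervalIntegrable (fun t => ‖q' t‖ ^ 2) volume a b :=
  IntegrableOn.intervalIntegrable (h.2.1 (min a b) (max a b))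

theorem eq_add_integral (h : IsH1loc q q') (a : ℝ) :
    q = fun t => q a + ∫ s in a..t, q' s :=
  funext fun t => by rw [← h.2.2 a t, add_sub_cancel]

theorem continuous (h : IsH1loc q q') : Continuous q := by
  rw [h.eq_add_integral 0]
  exact continuous_const.add (intervalIntegral.continuous_primitive h.intervalIntegrable 0)

theorem ae_hasDerivAt (h : IsH1loc q q') : ∀ᵐ t, HasDerivAt q (q' t) t := by
  filter_upwards [LocallyIntegrable.ae_hasDerivAt_integral h.1] with t ht
  rw [h.eq_add_integral 0]
  exact (ht 0).const_add _

theorem of_hasDerivAt (hq : ∀ t, HasDerivAt q (q' t) t) (hq' : Continuous q') : IsH1loc q q' :=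
  ⟨hq'.locallyIntegrable, fun _ _ => (by fun_prop : Continuous _).integrableOn_Icc,
    fun _ _ => (intervalIntegral.integral_eq_sub_of_hasDerivAt (fun t _ => hq t)
      (hq'.intervalIntegrable _ _)).symm⟩

theorem add (hq : IsH1loc q q') (hp : IsH1loc p p') :
    IsH1loc (fun t => q t + p t) fun t => q' t + p' t := by
  refine ⟨hq.1.add hp.1, fun a b => ?_, fun a b => ?_⟩
  · refine (((hq.2.1 a b).const_mul 2).add ((hp.2.1 a b).const_mul 2)).mono'
      ((hq.1.aestronglyMeasurable.add hp.1.aestronglyMeasurable).norm.pow 2).restrict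
      (ae_of_all _ fun t => ?_)
    rw [Real.norm_of_nonneg (by positivity)]
    calc ‖q' t + p' t‖ ^ 2 ≤ (‖q' t‖ + ‖p' t‖) ^ 2 := by gcongr; exact norm_add_le _ _
      _ ≤ 2 * (‖q' t‖ ^ 2 + ‖p' t‖ ^ 2) := add_sq_le
      _ = _ := by simp only [Pi.add_apply]; ring
  · rw [intervalIntegral.integral_add (hq.intervalIntegrable a b) (hp.intervalIntegrable a b),
      ← hq.2.2, ← hp.2.2, add_sub_add_comm]

theorem const_smul (hq : IsH1loc q q') (r : ℝ) :
    IsH1loc (fun t => r • q t) fun t => r • q' t := by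
  refine ⟨hq.1.smul r, fun a b => ?_, fun a b => ?_⟩
  · simp only [norm_smul, mul_pow]
    exact (hq.2.1 a b).const_mul (‖r‖ ^ 2)
  · rw [intervalIntegral.integral_smul, ← hq.2.2, smul_sub]

theorem sub (hq : IsH1loc q q') (hp : IsH1loc p p') :
    IsH1loc (fun t => q t - p t) fun t => q' t - p' t := by
  simpa only [neg_one_smul, ← sub_eq_add_neg] using hq.add (hp.const_smul (-1))

theorem comp_neg (hq : IsH1loc q q') : IsH1loc (fun t => q (-t)) fun t => -q' (-t) := by
  refine ⟨?_, fun a b => ?_, fun a b => ?_⟩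
  · refine LocallyIntegrable.neg ((locallyIntegrable_map_homeomorph (Homeomorph.neg ℝ)).1 ?_)
    rw [Homeomorph.coe_neg, Measure.map_neg_eq_self]
    exact hq.1
  · simp only [norm_neg]
    simpa [Function.comp_def] using
      ((Measure.measurePreserving_neg volume).integrableOn_comp_preimage
        (Homeomorph.neg ℝ).measurableEmbedding).2 (hq.2.1 (-b) (-a))
  · rw [intervalIntegral.integral_neg, intervalIntegral.integral_comp_neg, ← hq.2.2, neg_sub]

theorem stopped (hq : IsH1loc q q') (a b : ℝ) :
    IsH1loc (stoppedPath a b q) ((Ioc a b).indicator q') := by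
  refine ⟨hq.1.indicator measurableSet_Ioc, fun x y => ?_, fun x y => ?_⟩
  · have hsq : (fun t => ‖(Ioc a b).indicator q' t‖ ^ 2) =
        (Ioc a b).indicator fun t => ‖q' t‖ ^ 2 := by
      ext t
      by_cases ht : t ∈ Ioc a b <;> simp [ht]
    rw [hsq]
    exact (hq.2.1 x y).indicator measurableSet_Ioc
  · rw [intervalIntegral_indicator_Ioc, ← hq.2.2, stoppedPath, stoppedPath]

theorem norm_sub_sq_le (hq : IsH1loc q q') {a b : ℝ} (hab : a ≤ b) :
    ‖q b - q a‖ ^ 2 ≤ (b - a) * ∫ t in a..b, ‖q' t‖ ^ 2 := by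
  rw [hq.2.2]
  exact norm_sq_intervalIntegral_le hab (hq.intervalIntegrable a b)
    (hq.intervalIntegrable_norm_sq a b)

theorem eqOn_Icc_of_integral_norm_sq_sub_eq_zero (hq : IsH1loc q q') (hp : IsH1loc p p')
    {a b : ℝ} (ha : q a = p a) (h : ∫ t in a..b, ‖q' t - p' t‖ ^ 2 = 0) : EqOn q p (Icc a b) := by
  intro t ht
  have hle : ∫ s in a..t, ‖q' s - p' s‖ ^ 2 ≤ 0 :=
    (intervalIntegral.integral_mono_interval le_rfl ht.1 ht.2 (ae_of_all _ fun s => sq_nonneg _)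
      ((hq.sub hp).intervalIntegrable_norm_sq a b)).trans_eq h
  have hnorm := ((hq.sub hp).norm_sub_sq_le ht.1).trans
    (mul_nonpos_of_nonneg_of_nonpos (sub_nonneg.2 ht.1) hle)
  simpa [ha, sq_nonpos_iff, sub_eq_zero] using hnorm

theorem intervalIntegrable_apply (hq : IsH1loc q q') (i : Fin N) (a b : ℝ) :
    IntervalIntegrable (fun t => q' t i) volume a b :=
  ⟨(EuclideanSpace.proj (𝕜 := ℝ) i).integrable_comp (hq.intervalIntegrable a b).1,
    (EuclideanSpace.proj (𝕜 := ℝ) i).integrable_comp (hq.intervalIntegrable a b).2⟩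

theorem absolutelyContinuousOnInterval_apply (hq : IsH1loc q q') (i : Fin N) (a b : ℝ) :
    AbsolutelyContinuousOnInterval (fun t => q t i) a b := by
  have hcoord : (fun t => q t i) = (fun _ => q a i) + fun t => ∫ s in a..t, q' s i := by
    ext t
    have := congrArg (EuclideanSpace.proj (𝕜 := ℝ) i) (hq.2.2 a t)
    rw [← ContinuousLinearMap.intervalIntegral_comp_comm _ (hq.intervalIntegrable a t)] at this
    simpa [sub_eq_iff_eq_add'] using this
  rw [hcoord]
  exact (contDiff_const (n := 1)).contDiffOn.absolutelyContinuousOnInterval.add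
    ((hq.intervalIntegrable_apply i a b).absolutelyContinuousOnInterval_intervalIntegral
      left_mem_uIcc)

theorem ae_deriv_apply (hq : IsH1loc q q') (i : Fin N) :
    ∀ᵐ t, deriv (fun t => q t i) t = q' t i := by
  filter_upwards [hq.ae_hasDerivAt] with t ht
  exact ((EuclideanSpace.proj (𝕜 := ℝ) i).hasFDerivAt.comp_hasDerivAt t ht).deriv

theorem intervalIntegrable_inner (hq : IsH1loc q q') (hp : Continuous p) (a b : ℝ) :
    IntervalIntegrable (fun t => ⟪q' t, p t⟫) volume a b :=
  ((hq.intervalIntegrable a b).norm.mul_continuousOn hp.norm.continuousOn).mono_fun'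
    (hq.1.aestronglyMeasurable.inner hp.aestronglyMeasurable).restrict
    (ae_of_all _ fun _ => norm_inner_le_norm _ _)

theorem intervalIntegrable_inner_deriv (hq : IsH1loc q q') (hp : IsH1loc p p') (a b : ℝ) :
    IntervalIntegrable (fun t => ⟪q' t, p' t⟫) volume a b :=
  ((hq.intervalIntegrable_norm_sq a b).add (hp.intervalIntegrable_norm_sq a b)).mono_fun'
    (hq.1.aestronglyMeasurable.inner hp.1.aestronglyMeasurable).restrict
    (ae_of_all _ fun t => (norm_inner_le_norm _ _).trans (by
      nlinarith [two_mul_le_add_sq ‖q' t‖ ‖p' t‖, sq_nonneg ‖q' t‖, sq_nonneg ‖p' t‖]))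

theorem integral_inner_add_inner (hq : IsH1loc q q') (hp : IsH1loc p p') (a b : ℝ) :
    ∫ t in a..b, (⟪q' t, p t⟫ + ⟪p' t, q t⟫) = ⟪q b, p b⟫ - ⟪q a, p a⟫ := by
  have coord : ∀ i, ∫ t in a..b, (q' t i * p t i + p' t i * q t i) =
      q b i * p b i - q a i * p a i := by
    intro i
    rw [← (hq.absolutelyContinuousOnInterval_apply i a b).integral_deriv_mul_eq_sub
      (hp.absolutelyContinuousOnInterval_apply i a b)]
    refine intervalIntegral.integral_congr_ae ?_
    filter_upwards [hq.ae_deriv_apply i, hp.ae_deriv_apply i] with t hqt hpt _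
    rw [hqt, hpt, mul_comm (p' t i)]
  have hint : ∀ i, IntervalIntegrable (fun t => q' t i * p t i + p' t i * q t i) volume a b :=
    fun i => ((hq.intervalIntegrable_apply i a b).mul_continuousOn
      (by have := hp.continuous; fun_prop)).add
      ((hp.intervalIntegrable_apply i a b).mul_continuousOn
        (by have := hq.continuous; fun_prop))
  simp only [PiLp.inner_apply, Real.inner_apply, ← Finset.sum_add_distrib, ← Finset.sum_sub_distrib]
  rw [intervalIntegral.integral_finsetSum fun i _ => hint i]
  exact Finset.sum_congr rfl fun i _ => coord i

end IsH1loc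

section Action

variable {N : ℕ} {V : Euc N → ℝ} {c : ℝ} {q q' : ℝ → Euc N}

/-- The integrand `½|q̇|² + V(q) - c` of the action functional `lagJ`, as a real function of time
so that it can be integrated over compact intervals and differentiated along variations. -/
def lagrangian (V : Euc N → ℝ) (c : ℝ) (q q' : ℝ → Euc N) (t : ℝ) : ℝ :=
  2⁻¹ * ‖q' t‖ ^ 2 + (V (q t) - c)

theorem lagrangian_nonneg (hc : ∀ t, c ≤ V (q t)) (t : ℝ) : 0 ≤ lagrangian V c q q' t :=
  add_nonneg (by positivity) (sub_nonneg.2 (hc t))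

theorem IsH1loc.aestronglyMeasurable_lagrangian (hV : Continuous V) (hq : IsH1loc q q') (c : ℝ) :
    AEStronglyMeasurable (lagrangian V c q q') :=
  ((hq.1.aestronglyMeasurable.norm.pow 2).const_mul _).add
    ((hV.comp hq.continuous).sub continuous_const).aestronglyMeasurable

theorem IsH1loc.intervalIntegrable_lagrangian (hV : Continuous V) (hq : IsH1loc q q')
    (c a b : ℝ) : IntervalIntegrable (lagrangian V c q q') volume a b :=
  ((hq.intervalIntegrable_norm_sq a b).const_mul _).add
    (((hV.comp hq.continuous).sub continuous_const).intervalIntegrable a b)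

theorem lagJ_Ioc (hV : Continuous V) (hq : IsH1loc q q') (hc : ∀ t, c ≤ V (q t)) {a b : ℝ}
    (hab : a ≤ b) :
    lagJ V c q q' (Ioc a b) = ENNReal.ofReal (∫ t in a..b, lagrangian V c q q' t) := by
  rw [intervalIntegral.integral_of_le hab]
  exact (ofReal_integral_eq_lintegral_ofReal (hq.intervalIntegrable_lagrangian hV c a b).1
    (ae_of_all _ (lagrangian_nonneg hc))).symm

theorem lagJ_add_compl (V : Euc N → ℝ) (c : ℝ) (q q' : ℝ → Euc N) {s : Set ℝ}
    (hs : MeasurableSet s) : lagJ V c q q' s + lagJ V c q q' sᶜ = lagJ V c q q' univ := by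
  simp only [lagJ, setLIntegral_univ]
  exact lintegral_add_compl _ hs

theorem integrable_lagrangian (hV : Continuous V) (hq : IsH1loc q q') (hc : ∀ t, c ≤ V (q t))
    (hfin : lagJ V c q q' univ ≠ ⊤) : Integrable (lagrangian V c q q') :=
  (lintegral_ofReal_ne_top_iff_integrable (hq.aestronglyMeasurable_lagrangian hV c)
    (ae_of_all _ (lagrangian_nonneg hc))).1
    (by simpa only [lagJ, setLIntegral_univ, lagrangian] using hfin)

theorem integrable_norm_sq_of_lagJ_ne_top (hV : Continuous V) (hq : IsH1loc q q')
    (hc : ∀ t, c ≤ V (q t)) (hfin : lagJ V c q q' univ ≠ ⊤) :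
    Integrable fun t => ‖q' t‖ ^ 2 :=
  ((integrable_lagrangian hV hq hc hfin).const_mul 2).mono' (hq.1.aestronglyMeasurable.norm.pow 2)
    (ae_of_all _ fun t => by
      rw [Real.norm_of_nonneg (by positivity), lagrangian]
      linarith [hc t])

theorem integrable_potential_of_lagJ_ne_top (hV : Continuous V) (hq : IsH1loc q q')
    (hc : ∀ t, c ≤ V (q t)) (hfin : lagJ V c q q' univ ≠ ⊤) :
    Integrable fun t => V (q t) - c :=
  (integrable_lagrangian hV hq hc hfin).mono'
    ((hV.comp hq.continuous).sub continuous_const).aestronglyMeasurable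
    (ae_of_all _ fun t => by
      rw [Real.norm_of_nonneg (sub_nonneg.2 (hc t)), lagrangian]
      linarith [sq_nonneg ‖q' t‖])

theorem IsH1loc.uniformContinuous (hq : IsH1loc q q') (hint : Integrable fun t => ‖q' t‖ ^ 2) :
    UniformContinuous q := by
  set M := ∫ t, ‖q' t‖ ^ 2
  have : 0 ≤ M := integral_nonneg fun t => sq_nonneg _
  have holder : ∀ a b, a ≤ b → dist (q b) (q a) ^ 2 ≤ (b - a) * M := fun a b hab => by
    rw [dist_eq_norm]
    refine (hq.norm_sub_sq_le hab).trans (mul_le_mul_of_nonneg_left ?_ (sub_nonneg.2 hab))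
    rw [intervalIntegral.integral_of_le hab]
    exact setIntegral_le_integral hint (ae_of_all _ fun t => sq_nonneg _)
  have holder_abs : ∀ a b, dist (q a) (q b) ^ 2 ≤ dist a b * M := fun a b => by
    rcases le_total a b with hab | hba
    · simpa only [dist_comm a, dist_comm (q a), Real.dist_eq, abs_of_nonneg (sub_nonneg.2 hab)]
        using holder a b hab
    · simpa only [Real.dist_eq, abs_of_nonneg (sub_nonneg.2 hba)] using holder b a hba
  refine Metric.uniformContinuous_iff.2 fun ε hε => ⟨ε ^ 2 / (M + 1), by positivity, ?_⟩
  intro a b hab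
  rw [lt_div_iff₀ (by positivity)] at hab
  refine lt_of_pow_lt_pow_left₀ 2 hε.le ((holder_abs a b).trans_lt (lt_of_le_of_lt ?_ hab))
  gcongr
  linarith

theorem IsH1loc.tendsto_increment (hq : IsH1loc q q') (hint : Integrable fun t => ‖q' t‖ ^ 2)
    {r : ℝ} (hr : 0 ≤ r) : Tendsto (fun t => q (t + r) - q t) atTop (𝓝 0) := by
  have hsq : Tendsto (fun t => ‖q (t + r) - q t‖ ^ 2) atTop (𝓝 0) := by
    refine squeeze_zero (fun t => sq_nonneg _) (fun t => ?_)
      (by simpa using (tendsto_intervalIntegral_add_atTop (a := 0) hint.integrableOn r).const_mul r)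
    simpa only [add_sub_cancel_left] using hq.norm_sub_sq_le (le_add_of_nonneg_right (a := t) hr)
  exact tendsto_zero_iff_norm_tendsto_zero.2
    (by simpa only [Real.sqrt_sq (norm_nonneg _), Real.sqrt_zero] using hsq.sqrt)

end Action

section Minimizer

open scoped RealInnerProductSpace

variable {N : ℕ} {V : Euc N → ℝ} {c : ℝ} {Vm Vp : Set (Euc N)} {q q' p p' f f' : ℝ → Euc N}

/-- The pair `(q, q̇)` attains the infimum `m_c` of the action over `Γ_c`. Compared with `MemM`,
the normalization of `q 0` and the a priori bound on `q` are left out. -/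
structure IsMinimizer (V : Euc N → ℝ) (c : ℝ) (Vm Vp : Set (Euc N)) (q q' : ℝ → Euc N) :
    Prop where
  mem_Gamma : (q, q') ∈ Gamma V c Vm Vp
  lagJ_eq : lagJ V c q q' univ = mc V c Vm Vp

namespace IsMinimizer

theorem isH1loc (h : IsMinimizer V c Vm Vp q q') : IsH1loc q q' := h.mem_Gamma.1

theorem le_potential (h : IsMinimizer V c Vm Vp q q') (t : ℝ) : c ≤ V (q t) := h.mem_Gamma.2.1 t

theorem lagJ_le (h : IsMinimizer V c Vm Vp q q') (hp : (p, p') ∈ Gamma V c Vm Vp) :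
    lagJ V c q q' univ ≤ lagJ V c p p' univ :=
  h.lagJ_eq.trans_le (iInf₂_le (p, p') hp)

theorem integral_lagrangian_le (hV : Continuous V) (h : IsMinimizer V c Vm Vp q q')
    (hfin : mc V c Vm Vp ≠ ⊤) (hp : IsH1loc p p') (hpc : ∀ t, c ≤ V (p t)) {a b : ℝ}
    (hab : a ≤ b) (hpq : ∀ t ∉ Ioc a b, p t = q t ∧ p' t = q' t) :
    ∫ t in a..b, lagrangian V c q q' t ≤ ∫ t in a..b, lagrangian V c p p' t := by
  have hmem : (p, p') ∈ Gamma V c Vm Vp := by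
    refine ⟨hp, hpc, fun ε hε => ?_, fun ε hε => ?_⟩
    · refine ((h.mem_Gamma.2.2.1 ε hε).and_eventually (eventually_le_atBot a)).mono ?_
      rintro t ⟨ht, hta⟩
      simpa only [(hpq t fun hmem => hmem.1.not_ge hta).1] using ht
    · refine ((h.mem_Gamma.2.2.2 ε hε).and_eventually (eventually_gt_atTop b)).mono ?_
      rintro t ⟨ht, hbt⟩
      simpa only [(hpq t fun hmem => hmem.2.not_gt hbt).1] using ht
  have houtside : lagJ V c p p' (Ioc a b)ᶜ = lagJ V c q q' (Ioc a b)ᶜ :=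
    setLIntegral_congr_fun measurableSet_Ioc.compl fun t ht => by
      simp only [(hpq t ht).1, (hpq t ht).2]
  have hsplit := h.lagJ_le hmem
  rw [← lagJ_add_compl V c q q' measurableSet_Ioc, ← lagJ_add_compl V c p p' measurableSet_Ioc,
    houtside, ENNReal.add_le_add_iff_right, lagJ_Ioc hV h.isH1loc h.le_potential hab,
    lagJ_Ioc hV hp hpc hab] at hsplit
  · exact (ENNReal.ofReal_le_ofReal_iff (intervalIntegral.integral_nonneg hab fun t _ =>
      lagrangian_nonneg hpc t)).1 hsplit
  · exact ne_top_of_le_ne_top (h.lagJ_eq.trans_ne hfin)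
      (lintegral_mono_set (subset_univ _))

end IsMinimizer

theorem hasDerivAt_lagrangian_variation (hV : ContDiff ℝ 1 V) (c : ℝ) (q q' f f' : ℝ → Euc N)
    (t x : ℝ) :
    HasDerivAt (fun x : ℝ => lagrangian V c (fun t => q t + x • f t) (fun t => q' t + x • f' t) t)
      (⟪q' t + x • f' t, f' t⟫ + ⟪gradient V (q t + x • f t), f t⟫) x := by
  have line : ∀ v w : Euc N, HasDerivAt (fun x : ℝ => v + x • w) w x := fun v w => by
    simpa using ((hasDerivAt_id' x).smul_const w).const_add v
  have kinetic := ((line (q' t) (f' t)).norm_sq).const_mul (2⁻¹ : ℝ)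
  have potential := ((hV.differentiable one_ne_zero _).hasGradientAt.hasFDerivAt.comp_hasDerivAt x
    (line (q t) (f t))).sub_const c
  simpa [lagrangian, Function.comp_def] using kinetic.fun_add potential

theorem norm_inner_add_smul_le {F : Type*} [NormedAddCommGroup F] [InnerProductSpace ℝ F]
    (v w : F) {x : ℝ} (hx : |x| ≤ 1) : ‖⟪v + x • w, w⟫‖ ≤ ‖v‖ ^ 2 + 2 * ‖w‖ ^ 2 := by
  have hxw : ‖x • w‖ ≤ ‖w‖ := by
    rw [norm_smul]
    exact mul_le_of_le_one_left (norm_nonneg w) hx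
  calc ‖⟪v + x • w, w⟫‖ ≤ ‖v + x • w‖ * ‖w‖ := norm_inner_le_norm _ _
    _ ≤ (‖v‖ + ‖w‖) * ‖w‖ := by
      gcongr
      exact (norm_add_le _ _).trans (by gcongr)
    _ ≤ ‖v‖ ^ 2 + 2 * ‖w‖ ^ 2 := by
      nlinarith [sq_nonneg (‖v‖ - ‖w‖), sq_nonneg ‖v‖, sq_nonneg ‖w‖]

theorem hasDerivAt_integral_lagrangian_variation (hV : ContDiff ℝ 1 V) (c : ℝ)
    (hq : IsH1loc q q') (hf : IsH1loc f f') (a b : ℝ) :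
    HasDerivAt (fun x : ℝ => ∫ t in a..b,
        lagrangian V c (fun t => q t + x • f t) (fun t => q' t + x • f' t) t)
      (∫ t in a..b, (⟪q' t, f' t⟫ + ⟪gradient V (q t), f t⟫)) 0 := by
  have hgrad := continuous_gradient hV
  have hqc := hq.continuous
  have hfc := hf.continuous
  have hvar : ∀ x : ℝ, IsH1loc (fun t => q t + x • f t) fun t => q' t + x • f' t :=
    fun x => hq.add (hf.const_smul x)
  obtain ⟨C, hC⟩ :=
    ((isCompact_Icc (a := (-1 : ℝ)) (b := 1)).prod (isCompact_uIcc (a := a) (b := b)))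
    |>.exists_bound_of_continuousOn
      (f := fun z : ℝ × ℝ => ⟪gradient V (q z.2 + z.1 • f z.2), f z.2⟫) (by fun_prop)
  have hderiv := intervalIntegral.hasDerivAt_integral_of_dominated_loc_of_deriv_le
    (μ := volume) (𝕜 := ℝ) (a := a) (b := b) (x₀ := 0)
    (F := fun x t => lagrangian V c (fun t => q t + x • f t) (fun t => q' t + x • f' t) t)
    (F' := fun x t => ⟪q' t + x • f' t, f' t⟫ + ⟪gradient V (q t + x • f t), f t⟫)
    (bound := fun t => ‖q' t‖ ^ 2 + 2 * ‖f' t‖ ^ 2 + C)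
    (Ioo_mem_nhds (by norm_num) one_pos)
    (Eventually.of_forall fun x =>
      ((hvar x).aestronglyMeasurable_lagrangian hV.continuous c).restrict)
    ((hvar 0).intervalIntegrable_lagrangian hV.continuous c a b)
    (by
      simp only [zero_smul, add_zero]
      exact ((hq.1.aestronglyMeasurable.inner hf.1.aestronglyMeasurable).add
        (by fun_prop : Continuous _).aestronglyMeasurable).restrict)
    (ae_of_all _ fun t ht x hx => (norm_add_le _ _).trans
      (add_le_add (norm_inner_add_smul_le _ _ (abs_le.2 ⟨hx.1.le, hx.2.le⟩))
        (hC (x, t) ⟨⟨hx.1.le, hx.2.le⟩, uIoc_subset_uIcc ht⟩)))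
    (((hq.intervalIntegrable_norm_sq a b).add
      ((hf.intervalIntegrable_norm_sq a b).const_mul 2)).add intervalIntegrable_const)
    (ae_of_all _ fun t _ x _ => hasDerivAt_lagrangian_variation hV c q q' f f' t x)
  simpa only [zero_smul, add_zero] using hderiv.2

namespace IsMinimizer

theorem integral_variation_eq_zero_of_support (hV : ContDiff ℝ 1 V) (h : IsMinimizer V c Vm Vp q q')
    (hfin : mc V c Vm Vp ≠ ⊤) {a b : ℝ} (hab : a ≤ b) (hpos : ∀ t ∈ Icc a b, c < V (q t))
    (hf : IsH1loc f f') (hoff : ∀ t ∉ Ioc a b, f t = 0 ∧ f' t = 0) :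
    ∫ t in a..b, (⟪q' t, f' t⟫ + ⟪gradient V (q t), f t⟫) = 0 := by
  have hVc := hV.continuous
  have hqc := h.isH1loc.continuous
  have hfc := hf.continuous
  refine IsLocalMin.hasDerivAt_eq_zero ?_
    (hasDerivAt_integral_lagrangian_variation hV c h.isH1loc hf a b)
  have hadm : ∀ᶠ x : ℝ in 𝓝 0, ∀ t ∈ Icc a b, c < V (q t + x • f t) :=
    isCompact_Icc.eventually_forall_of_forall_eventually fun t ht =>
      (by fun_prop : Continuous fun z : ℝ × ℝ => V (q z.2 + z.1 • f z.2)).continuousAt.eventually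
        (lt_mem_nhds (by simpa using hpos t ht))
  filter_upwards [hadm] with x hx
  have hle := h.integral_lagrangian_le hVc hfin (h.isH1loc.add (hf.const_smul x))
    (fun t => by
      by_cases ht : t ∈ Ioc a b
      · exact (hx t (Ioc_subset_Icc_self ht)).le
      · simpa [(hoff t ht).1] using h.le_potential t)
    hab (fun t ht => by simp [hoff t ht])
  simpa only [zero_smul, add_zero] using hle

theorem integral_variation_eq_zero (hV : ContDiff ℝ 1 V) (h : IsMinimizer V c Vm Vp q q')
    (hfin : mc V c Vm Vp ≠ ⊤) {a b : ℝ} (hab : a ≤ b) (hpos : ∀ t ∈ Icc a b, c < V (q t))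
    (hf : IsH1loc f f') (hfa : f a = 0) (hfb : f b = 0) :
    ∫ t in a..b, (⟪q' t, f' t⟫ + ⟪gradient V (q t), f t⟫) = 0 := by
  rw [← h.integral_variation_eq_zero_of_support hV hfin hab hpos (hf.stopped a b)
    fun t ht => ⟨?_, indicator_of_notMem ht f'⟩]
  · refine intervalIntegral.integral_congr_ae (ae_of_all _ fun t ht => ?_)
    rw [uIoc_of_le hab] at ht
    rw [indicator_of_mem ht, stoppedPath_of_mem_Icc f (Ioc_subset_Icc_self ht)]
  · rcases le_or_gt t a with hta | hat
    · rw [stoppedPath_of_le f hab hta, hfa]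
    · rw [stoppedPath_of_ge f hab (le_of_not_ge fun htb => ht ⟨hat, htb⟩), hfb]

/- The Euler-Lagrange equation without regularity theory: `u` solves `ü = ∇V(q)` along the given
path `q`, and testing the first variation with `q - u` makes the potential terms cancel, leaving
`∫ ‖q̇ - u̇‖² = 0`. -/
theorem eqOn_Icc_of_hasDerivAt (hV : ContDiff ℝ 1 V) (h : IsMinimizer V c Vm Vp q q')
    (hfin : mc V c Vm Vp ≠ ⊤) {a b : ℝ} (hab : a ≤ b) (hpos : ∀ t ∈ Icc a b, c < V (q t))
    {u u' : ℝ → Euc N} (hu : ∀ t, HasDerivAt u (u' t) t)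
    (hu' : ∀ t, HasDerivAt u' (gradient V (q t)) t) (hua : u a = q a) (hub : u b = q b) :
    EqOn q u (Icc a b) := by
  have hgrad : Continuous fun t => gradient V (q t) :=
    (continuous_gradient hV).comp h.isH1loc.continuous
  have hu'c : Continuous u' := continuous_iff_continuousAt.2 fun t => (hu' t).continuousAt
  have hH1u : IsH1loc u u' := .of_hasDerivAt hu hu'c
  have hw := h.isH1loc.sub hH1u
  have variation := h.integral_variation_eq_zero hV hfin hab hpos hw
    (sub_eq_zero.2 hua.symm) (sub_eq_zero.2 hub.symm)
  have parts := (IsH1loc.of_hasDerivAt hu' hgrad).integral_inner_add_inner hw a b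
  rw [hua, hub, sub_self, sub_self, inner_zero_right, inner_zero_right, sub_zero] at parts
  refine h.isH1loc.eqOn_Icc_of_integral_norm_sq_sub_eq_zero hH1u hua.symm ?_
  calc ∫ t in a..b, ‖q' t - u' t‖ ^ 2
      = ∫ t in a..b, ((⟪q' t, q' t - u' t⟫ + ⟪gradient V (q t), q t - u t⟫)
          - (⟪gradient V (q t), q t - u t⟫ + ⟪q' t - u' t, u' t⟫)) := by
        refine intervalIntegral.integral_congr fun t _ => ?_
        simp only [← real_inner_self_eq_norm_sq, inner_sub_left, inner_sub_right]
        rw [real_inner_comm (u' t) (q' t)]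
        ring
    _ = 0 := by
        have hpot : IntervalIntegrable (fun t => ⟪gradient V (q t), q t - u t⟫) volume a b :=
          (hgrad.inner hw.continuous).intervalIntegrable a b
        rw [intervalIntegral.integral_sub
          ((h.isH1loc.intervalIntegrable_inner_deriv hw a b).add hpot)
          (hpot.add (hw.intervalIntegrable_inner hu'c a b)), variation, parts, sub_zero]

theorem exists_eventuallyEq_hasDerivAt (hV : ContDiff ℝ 1 V) (h : IsMinimizer V c Vm Vp q q')
    (hfin : mc V c Vm Vp ≠ ⊤) {t : ℝ} (ht : c < V (q t)) :
    ∃ u u' : ℝ → Euc N, q =ᶠ[𝓝 t] u ∧ (∀ s, HasDerivAt u (u' s) s) ∧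
      ∀ s, HasDerivAt u' (gradient V (q s)) s := by
  have hqc := h.isH1loc.continuous
  obtain ⟨δ, hδ, hball⟩ := Metric.eventually_nhds_iff_ball.1
    ((hV.continuous.comp hqc).continuousAt.eventually (lt_mem_nhds ht))
  have hlt : t - δ / 2 < t + δ / 2 := by linarith
  obtain ⟨u, u', hu, hu', hua, hub⟩ := exists_hasDerivAt_hasDerivAt_eq_eq
    ((continuous_gradient hV).comp hqc) hlt.ne (q (t - δ / 2)) (q (t + δ / 2))
  refine ⟨u, u', ?_, hu, hu'⟩
  refine (h.eqOn_Icc_of_hasDerivAt hV hfin hlt.le (fun s hs => hball s ?_) hu hu' hua hub)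
    |>.eventuallyEq_of_mem (Icc_mem_nhds (by linarith) (by linarith))
  rw [Real.ball_eq_Ioo]
  exact ⟨by linarith [hs.1], by linarith [hs.2]⟩

theorem hasDerivAt (hV : ContDiff ℝ 1 V) (h : IsMinimizer V c Vm Vp q q')
    (hfin : mc V c Vm Vp ≠ ⊤) {t : ℝ} (ht : c < V (q t)) : HasDerivAt q (deriv q t) t := by
  obtain ⟨u, u', hqu, hu, -⟩ := h.exists_eventuallyEq_hasDerivAt hV hfin ht
  exact ((hu t).congr_of_eventuallyEq hqu).differentiableAt.hasDerivAt

theorem hasDerivAt_deriv (hV : ContDiff ℝ 1 V) (h : IsMinimizer V c Vm Vp q q')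
    (hfin : mc V c Vm Vp ≠ ⊤) {t : ℝ} (ht : c < V (q t)) :
    HasDerivAt (deriv q) (gradient V (q t)) t := by
  obtain ⟨u, u', hqu, hu, hu'⟩ := h.exists_eventuallyEq_hasDerivAt hV hfin ht
  exact (hu' t).congr_of_eventuallyEq (hqu.deriv.trans (.of_eq (funext fun s => (hu s).deriv)))

end IsMinimizer

end Minimizer

section SetDist

variable {E : Type*} [PseudoMetricSpace E] {A B : Set E}

theorem setDist_le_dist {x y : E} (hx : x ∈ A) (hy : y ∈ B) : setDist A B ≤ dist x y :=
  csInf_le ⟨0, forall_mem_image.2 fun _ _ => dist_nonneg⟩ (mem_image_of_mem _ (mk_mem_prod hx hy))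

theorem setDist_comm (A B : Set E) : setDist A B = setDist B A := by
  rw [setDist, setDist, ← image_swap_prod, image_image]
  simp only [Prod.fst_swap, Prod.snd_swap, dist_comm]

theorem nonempty_right_of_setDist_pos (h : 0 < setDist A B) : B.Nonempty := by
  by_contra hB
  rw [setDist, not_nonempty_iff_eq_empty.1 hB, prod_empty, image_empty, Real.sInf_empty] at h
  exact h.false

theorem disjoint_thickening_half_setDist :
    Disjoint (thickening (setDist A B / 2) A) (thickening (setDist A B / 2) B) := by
  refine disjoint_left.2 fun x hxA hxB => ?_
  obtain ⟨a, ha, hxa⟩ := mem_thickening_iff.1 hxA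
  obtain ⟨b, hb, hxb⟩ := mem_thickening_iff.1 hxB
  linarith [setDist_le_dist ha hb, dist_triangle_left a b x]

end SetDist

theorem exists_mem_segment_eq_forall_le {F : Type*} [AddCommGroup F] [Module ℝ F]
    [TopologicalSpace F] [IsTopologicalAddGroup F] [ContinuousSMul ℝ F] {V : F → ℝ}
    (hV : Continuous V) {c : ℝ} {x y : F} (hx : c ≤ V x) (hy : V y ≤ c) :
    ∃ z ∈ segment ℝ x y, V z = c ∧ ∀ w ∈ segment ℝ x z, c ≤ V w := by
  set g : ℝ → ℝ := fun s => V (x + s • (y - x))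
  have hg : Continuous g := by fun_prop
  have hg0 : c ≤ g 0 := by simpa [g] using hx
  have hroot : ∀ s, 0 ≤ s → g s ≤ c → ∃ r ∈ Icc 0 s, g r = c := fun s hs hgs =>
    intermediate_value_Icc' hs hg.continuousOn ⟨hgs, hg0⟩
  obtain ⟨r, hr, hgr⟩ := hroot 1 zero_le_one (by simpa [g] using hy)
  obtain ⟨s, ⟨hs, hgs⟩, hleast⟩ :=
    (isCompact_Icc.inter_right (isClosed_singleton.preimage hg)).exists_isLeast ⟨r, hr, hgr⟩
  refine ⟨x + s • (y - x), segment_eq_image' ℝ x y ▸ mem_image_of_mem _ hs, hgs, ?_⟩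
  rw [segment_eq_image', forall_mem_image]
  intro θ hθ
  rw [add_sub_cancel_left, smul_smul]
  by_contra! hlt
  obtain ⟨r, hr, hgr⟩ := hroot (θ * s) (mul_nonneg hθ.1 hs.1) hlt.le
  have hθs : θ * s ≤ s := mul_le_of_le_one_left hs.1 hθ.2
  have hsr : s ≤ r := hleast ⟨⟨hr.1, hr.2.trans (hθs.trans hs.2)⟩, hgr⟩
  have heq : θ * s = s := hθs.antisymm (hsr.trans hr.2)
  rw [heq] at hlt
  exact hlt.ne hgs

section FiniteAction

variable {N : ℕ} {V : Euc N → ℝ} {c : ℝ} {Vm Vp : Set (Euc N)} {q q' : ℝ → Euc N}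

theorem exists_mem_right_of_infDist_lt (hV : Continuous V) (hsplit : {x | V x ≤ c} = Vm ∪ Vp)
    (hsep : 0 < setDist Vm Vp) {x : Euc N} (hx : c ≤ V x) (hdist : infDist x Vp < setDist Vm Vp) :
    ∃ z ∈ Vp, V z = c ∧ ∀ w ∈ segment ℝ x z, c ≤ V w := by
  obtain ⟨y, hy, hxy⟩ := (infDist_lt_iff (nonempty_right_of_setDist_pos hsep)).1 hdist
  have hyc : V y ≤ c := hsplit.superset (Or.inr hy)
  obtain ⟨z, hz, hzc, hseg⟩ := exists_mem_segment_eq_forall_le hV hx hyc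
  have hzy : dist z y ≤ dist x y :=
    (convex_closedBall y (dist x y)).segment_subset (mem_closedBall.2 le_rfl)
      (mem_closedBall_self dist_nonneg) hz
  refine ⟨z, (hsplit.subset hzc.le).resolve_left fun hzm => ?_, hzc, hseg⟩
  exact ((setDist_le_dist hzm hy).trans hzy).not_gt hxy

theorem stoppedPath_ramp_mem_segment {E : Type*} [AddCommGroup E] [Module ℝ E] (T t : ℝ) (x y : E) :
    x + stoppedPath T (T + 1) (fun s => (s - T) • (y - x)) t ∈ segment ℝ x y := by
  rw [segment_eq_image']
  exact mem_image_of_mem _ ⟨sub_nonneg.2 (le_max_left _ _),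
    sub_le_iff_le_add'.2 (max_le (by linarith) (min_le_left _ _))⟩

theorem stoppedPath_ramp_neg_mem_segment {E : Type*} [AddCommGroup E] [Module ℝ E] (S t : ℝ)
    (x y : E) : x + stoppedPath (S - 1) S (fun s => (S - s) • (y - x)) t ∈ segment ℝ x y := by
  rw [segment_eq_image']
  exact mem_image_of_mem _ ⟨sub_nonneg.2 (max_le (by linarith) (min_le_left _ _)),
    sub_le_comm.1 (le_max_left _ _)⟩

theorem lagJ_univ_ne_top_of_eqOn_compl_Ioc (hV : Continuous V) (hq : IsH1loc q q')
    (hc : ∀ t, c ≤ V (q t)) {a b : ℝ} (hab : a ≤ b)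
    (hoff : ∀ t ∉ Ioc a b, q' t = 0 ∧ V (q t) = c) : lagJ V c q q' univ ≠ ⊤ := by
  have hzero : lagJ V c q q' (Ioc a b)ᶜ = 0 :=
    setLIntegral_eq_zero measurableSet_Ioc.compl fun t ht => by simp [hoff t ht]
  rw [← lagJ_add_compl V c q q' measurableSet_Ioc, hzero, add_zero, lagJ_Ioc hV hq hc hab]
  exact ENNReal.ofReal_ne_top

theorem exists_isH1loc_continuation (hq : IsH1loc q q') {S T : ℝ} (hST : S ≤ T) (x y : Euc N) :
    ∃ p p', IsH1loc p p' ∧ (∀ t ≤ S, p t ∈ segment ℝ (q S) x) ∧ (∀ t ∈ Icc S T, p t = q t) ∧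
      (∀ t ≥ T, p t ∈ segment ℝ (q T) y) ∧ (∀ t ≤ S - 1, p t = x) ∧ (∀ t ≥ T + 1, p t = y) ∧
      ∀ t ∉ Ioc (S - 1) (T + 1), p' t = 0 := by
  set left : ℝ → Euc N := fun t => (S - t) • (x - q S)
  set right : ℝ → Euc N := fun t => (t - T) • (y - q T)
  have hleft : ∀ t, HasDerivAt left (-(1 : ℝ) • (x - q S)) t := fun t =>
    ((hasDerivAt_id' t).const_sub S).smul_const _
  have hright : ∀ t, HasDerivAt right ((1 : ℝ) • (y - q T)) t := fun t =>
    ((hasDerivAt_id' t).sub_const T).smul_const _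
  have hS : S - 1 ≤ S := by linarith
  have hT : T ≤ T + 1 := by linarith
  have left_zero : ∀ t ≥ S, stoppedPath (S - 1) S left t = 0 := fun t ht => by
    simp [stoppedPath_of_ge left hS ht, left]
  have right_zero : ∀ t ≤ T, stoppedPath T (T + 1) right t = 0 := fun t ht => by
    simp [stoppedPath_of_le right hT ht, right]
  have hp := ((hq.stopped S T).add ((IsH1loc.of_hasDerivAt hleft continuous_const).stopped
    (S - 1) S)).add ((IsH1loc.of_hasDerivAt hright continuous_const).stopped T (T + 1))
  refine ⟨_, _, hp, fun t ht => ?_, fun t ht => ?_,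
    fun t ht => ?_, fun t ht => ?_, fun t ht => ?_, fun t ht => ?_⟩
  · rw [right_zero t (ht.trans hST), add_zero, stoppedPath_of_le q hST ht]
    exact stoppedPath_ramp_neg_mem_segment S t (q S) x
  · rw [left_zero t ht.1, right_zero t ht.2, stoppedPath_of_mem_Icc q ht, add_zero, add_zero]
  · rw [left_zero t (hST.trans ht), add_zero, stoppedPath_of_ge q hST ht]
    exact stoppedPath_ramp_mem_segment T t (q T) y
  · rw [right_zero t (by linarith), stoppedPath_of_le q hST (by linarith),
      stoppedPath_of_le left hS ht]
    simp [left]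
  · rw [left_zero t (by linarith), stoppedPath_of_ge q hST (by linarith),
      stoppedPath_of_ge right hT ht]
    simp [right]
  · have hmem : t ∉ Ioc S T ∧ t ∉ Ioc (S - 1) S ∧ t ∉ Ioc T (T + 1) := by
      grind
    simp only [indicator_of_notMem hmem.1, indicator_of_notMem hmem.2.1,
      indicator_of_notMem hmem.2.2, add_zero]

theorem exists_mem_Gamma_lagJ_ne_top (hV : Continuous V) (hq : IsH1loc q q')
    (hc : ∀ t, c ≤ V (q t)) {S T : ℝ} (hST : S ≤ T) {x y : Euc N} (hx : x ∈ Vm) (hy : y ∈ Vp)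
    (hVx : V x = c) (hVy : V y = c) (hSx : ∀ z ∈ segment ℝ (q S) x, c ≤ V z)
    (hTy : ∀ z ∈ segment ℝ (q T) y, c ≤ V z) :
    ∃ p ∈ Gamma V c Vm Vp, lagJ V c p.1 p.2 univ ≠ ⊤ := by
  obtain ⟨p, p', hp, hpS, hpq, hpT, hpx, hpy, hp'⟩ := exists_isH1loc_continuation hq hST x y
  have hpc : ∀ t, c ≤ V (p t) := fun t => by
    rcases le_total t S with htS | hSt
    · exact hSx _ (hpS t htS)
    rcases le_total t T with htT | hTt
    · exact hpq t ⟨hSt, htT⟩ ▸ hc t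
    · exact hTy _ (hpT t hTt)
  refine ⟨(p, p'), ⟨hp, hpc, fun ε hε => Eventually.frequently ?_,
    fun ε hε => Eventually.frequently ?_⟩,
    lagJ_univ_ne_top_of_eqOn_compl_Ioc hV hp hpc (a := S - 1) (b := T + 1) (by linarith)
      fun t ht => ⟨hp' t ht, ?_⟩⟩
  · filter_upwards [eventually_le_atBot (S - 1)] with t ht
    rwa [hpx t ht, infDist_zero_of_mem hx]
  · filter_upwards [eventually_ge_atTop (T + 1)] with t ht
    rwa [hpy t ht, infDist_zero_of_mem hy]
  · change V (p t) = c
    rcases le_or_gt t (S - 1) with htS | hSt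
    · rw [hpx t htS, hVx]
    · rw [hpy t (le_of_not_ge fun htT => ht ⟨hSt, htT⟩), hVy]

theorem mc_ne_top (hV : Continuous V) (hsplit : {x | V x ≤ c} = Vm ∪ Vp)
    (hsep : 0 < setDist Vm Vp) (hne : (Gamma V c Vm Vp).Nonempty) : mc V c Vm Vp ≠ ⊤ := by
  obtain ⟨⟨q, q'⟩, hq, hc, hm, hp⟩ := hne
  obtain ⟨S, hS, hS0⟩ := ((hm _ hsep).and_eventually (eventually_le_atBot 0)).exists
  obtain ⟨T, hT, hT0⟩ := ((hp _ hsep).and_eventually (eventually_ge_atTop 0)).exists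
  rw [setDist_comm] at hS
  obtain ⟨x, hx, hVx, hSx⟩ := exists_mem_right_of_infDist_lt hV (hsplit.trans (union_comm _ _))
    (setDist_comm Vm Vp ▸ hsep) (hc S) hS
  obtain ⟨y, hy, hVy, hTy⟩ := exists_mem_right_of_infDist_lt hV hsplit hsep (hc T) hT
  obtain ⟨p, hp, hfin⟩ :=
    exists_mem_Gamma_lagJ_ne_top hV hq hc (hS0.trans hT0) hx hy hVx hVy hSx hTy
  exact ne_top_of_le_ne_top hfin (iInf₂_le p hp)

end FiniteAction

section TimeReversal

variable {N : ℕ} {V : Euc N → ℝ} {c : ℝ} {Vm Vp : Set (Euc N)} {q q' : ℝ → Euc N}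

theorem comp_neg_mem_Gamma (h : (q, q') ∈ Gamma V c Vm Vp) :
    (fun t => q (-t), fun t => -q' (-t)) ∈ Gamma V c Vp Vm := by
  refine ⟨h.1.comp_neg, fun t => h.2.1 (-t), fun ε hε => ?_, fun ε hε => ?_⟩
  · rw [← map_neg_atTop, frequently_map]
    simpa only [neg_neg] using h.2.2.2 ε hε
  · rw [← map_neg_atBot, frequently_map]
    simpa only [neg_neg] using h.2.2.1 ε hε

theorem lagJ_comp_neg (V : Euc N → ℝ) (c : ℝ) (q q' : ℝ → Euc N) :
    lagJ V c (fun t => q (-t)) (fun t => -q' (-t)) univ = lagJ V c q q' univ := by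
  simp only [lagJ, norm_neg, setLIntegral_univ]
  exact (Measure.measurePreserving_neg volume).lintegral_comp_emb
    (Homeomorph.neg ℝ).measurableEmbedding
    fun t => ENNReal.ofReal (2⁻¹ * ‖q' t‖ ^ 2 + (V (q t) - c))

theorem mc_comm (V : Euc N → ℝ) (c : ℝ) (Vm Vp : Set (Euc N)) : mc V c Vm Vp = mc V c Vp Vm := by
  have le_swap : ∀ A B : Set (Euc N), mc V c A B ≤ mc V c B A := fun A B =>
    le_iInf₂ fun p hp => iInf₂_le_of_le _ (comp_neg_mem_Gamma hp) (lagJ_comp_neg V c p.1 p.2).le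
  exact (le_swap Vm Vp).antisymm (le_swap Vp Vm)

theorem IsMinimizer.comp_neg (h : IsMinimizer V c Vm Vp q q') :
    IsMinimizer V c Vp Vm (fun t => q (-t)) fun t => -q' (-t) :=
  ⟨comp_neg_mem_Gamma h.mem_Gamma, (lagJ_comp_neg V c q q').trans (h.lagJ_eq.trans (mc_comm ..))⟩

end TimeReversal

section MinimizerAsymptotics

variable {N : ℕ} {V : Euc N → ℝ} {c : ℝ} {Vm Vp K : Set (Euc N)} {q q' : ℝ → Euc N}

theorem tendsto_potential_atTop_of_lagJ_ne_top (hV : Continuous V) (hq : IsH1loc q q')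
    (hc : ∀ t, c ≤ V (q t)) (hfin : lagJ V c q q' univ ≠ ⊤) (hK : IsCompact K)
    (hqK : ∀ t, q t ∈ K) : Tendsto (fun t => V (q t)) atTop (𝓝 c) := by
  have hqu := hq.uniformContinuous (integrable_norm_sq_of_lagJ_ne_top hV hq hc hfin)
  rw [← tendsto_sub_nhds_zero_iff]
  exact tendsto_zero_of_uniformContinuous_of_integrableOn (a := 0)
    (uniformContinuous_comp_of_range_subset hK (hV.sub continuous_const).continuousOn hqu hqK)
    (integrable_potential_of_lagJ_ne_top hV hq hc hfin).integrableOn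

theorem eventually_mem_thickening_of_tendsto_potential (hV : Continuous V)
    (hsplit : {x | V x ≤ c} = Vm ∪ Vp) (hsep : 0 < setDist Vm Vp) (hq : Continuous q)
    (hK : IsCompact K) (hqK : ∀ᶠ t in atTop, q t ∈ K) (hVq : Tendsto (fun t => V (q t)) atTop (𝓝 c))
    (hp : ∀ ε > 0, ∃ᶠ t in atTop, infDist (q t) Vp < ε) :
    ∀ᶠ t in atTop, q t ∈ thickening (setDist Vm Vp / 2) Vp := by
  have hδ : 0 < setDist Vm Vp / 2 := half_pos hsep
  have hunion : ∀ᶠ t in atTop,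
      q t ∈ thickening (setDist Vm Vp / 2) Vm ∪ thickening (setDist Vm Vp / 2) Vp :=
    eventually_mem_of_tendsto_comp hK hqK hV hVq (isOpen_thickening.union isOpen_thickening)
      fun x hx => (hsplit.subset (mem_singleton_iff.1 hx).le).imp
        (fun h => self_subset_thickening hδ _ h) fun h => self_subset_thickening hδ _ h
  obtain ⟨T, hT⟩ := eventually_atTop.1 hunion
  refine eventually_atTop.2 ⟨T, fun t ht => ?_⟩
  obtain ⟨s, hs, hTs⟩ := ((hp _ hδ).and_eventually (eventually_ge_atTop T)).exists
  exact (isPreconnected_Ici.image q hq.continuousOn).subset_right_of_subset_union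
    isOpen_thickening isOpen_thickening disjoint_thickening_half_setDist (image_subset_iff.2 hT)
    ⟨q s, mem_image_of_mem q hTs, mem_thickening_iff_infDist_lt
      (nonempty_right_of_setDist_pos hsep) |>.2 hs⟩ (mem_image_of_mem q ht)

theorem mem_right_of_mapClusterPt (hsplit : {x | V x ≤ c} = Vm ∪ Vp) (hsep : 0 < setDist Vm Vp)
    (hq : ∀ᶠ t in atTop, q t ∈ thickening (setDist Vm Vp / 2) Vp) {x : Euc N} (hx : V x ≤ c)
    (hxq : MapClusterPt x atTop q) : x ∈ Vp := by
  refine (hsplit.subset hx).resolve_left fun hxm => ?_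
  obtain ⟨t, htm, htp⟩ := ((hxq.frequently (isOpen_thickening.mem_nhds
    (self_subset_thickening (half_pos hsep) Vm hxm))).and_eventually hq).exists
  exact disjoint_thickening_half_setDist.notMem_of_mem_left htm htp

namespace IsMinimizer

theorem tendsto_deriv_atTop (hV : ContDiff ℝ 1 V) (h : IsMinimizer V c Vm Vp q q')
    (hfin : mc V c Vm Vp ≠ ⊤) (hK : IsCompact K) (hqK : ∀ t, q t ∈ K)
    (hpos : ∀ᶠ t in atTop, c < V (q t)) : Tendsto (deriv q) atTop (𝓝 0) := by
  have hint := integrable_norm_sq_of_lagJ_ne_top hV.continuous h.isH1loc h.le_potential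
    (h.lagJ_eq.trans_ne hfin)
  obtain ⟨T, hT⟩ := eventually_atTop.1 hpos
  obtain ⟨C, hC⟩ := hK.exists_bound_of_continuousOn (continuous_gradient hV).continuousOn
  have hlip : LipschitzOnWith C.toNNReal (deriv q) (Ici T) :=
    (convex_Ici T).lipschitzOnWith_of_nnnorm_hasDerivWithin_le
      (fun t ht => (h.hasDerivAt_deriv hV hfin (hT t ht)).hasDerivWithinAt) fun t _ =>
        NNReal.le_toNNReal_of_coe_le (hC _ (hqK t))
  exact tendsto_deriv_zero_of_tendsto_increment (fun t ht => h.hasDerivAt hV hfin (hT t ht))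
    hlip.uniformContinuousOn fun r hr => h.isH1loc.tendsto_increment hint hr.le

theorem tendsto_gradient_atTop (hV : ContDiff ℝ 1 V) (h : IsMinimizer V c Vm Vp q q')
    (hfin : mc V c Vm Vp ≠ ⊤) (hK : IsCompact K) (hqK : ∀ t, q t ∈ K)
    (hpos : ∀ᶠ t in atTop, c < V (q t)) :
    Tendsto (fun t => gradient V (q t)) atTop (𝓝 0) := by
  have hqu := h.isH1loc.uniformContinuous (integrable_norm_sq_of_lagJ_ne_top hV.continuous
    h.isH1loc h.le_potential (h.lagJ_eq.trans_ne hfin))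
  obtain ⟨T, hT⟩ := eventually_atTop.1 hpos
  have hderiv := h.tendsto_deriv_atTop hV hfin hK hqK hpos
  refine tendsto_deriv_zero_of_tendsto_increment
    (fun t ht => h.hasDerivAt_deriv hV hfin (hT t ht))
    (uniformContinuous_comp_of_range_subset hK (continuous_gradient hV).continuousOn hqu
      hqK).uniformContinuousOn fun r _ => ?_
  simpa using (hderiv.comp (tendsto_atTop_add_const_right _ r tendsto_id)).sub hderiv

theorem eventually_mem_thickening_right (hV : Continuous V) (hsplit : {x | V x ≤ c} = Vm ∪ Vp)
    (hsep : 0 < setDist Vm Vp) (h : IsMinimizer V c Vm Vp q q') (hK : IsCompact K)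
    (hqK : ∀ t, q t ∈ K) : ∀ᶠ t in atTop, q t ∈ thickening (setDist Vm Vp / 2) Vp :=
  eventually_mem_thickening_of_tendsto_potential hV hsplit hsep h.isH1loc.continuous hK
    (.of_forall hqK) (tendsto_potential_atTop_of_lagJ_ne_top hV h.isH1loc h.le_potential
      (h.lagJ_eq.trans_ne (mc_ne_top hV hsplit hsep ⟨_, h.mem_Gamma⟩)) hK hqK)
    h.mem_Gamma.2.2.2

theorem setOf_mapClusterPt_subset (hV : ContDiff ℝ 1 V) (hsplit : {x | V x ≤ c} = Vm ∪ Vp)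
    (hsep : 0 < setDist Vm Vp) (h : IsMinimizer V c Vm Vp q q') (hK : IsCompact K)
    (hqK : ∀ t, q t ∈ K) (hpos : ∀ᶠ t in atTop, c < V (q t)) :
    {ξ | MapClusterPt ξ atTop q} ⊆ Vp ∩ {ξ | V ξ = c ∧ gradient V ξ = 0} := by
  intro ξ hξ
  have hfin : mc V c Vm Vp ≠ ⊤ := mc_ne_top hV.continuous hsplit hsep ⟨_, h.mem_Gamma⟩
  have hVξ : V ξ = c := eq_of_mapClusterPt_of_tendsto_comp hξ hV.continuous.continuousAt
    (tendsto_potential_atTop_of_lagJ_ne_top hV.continuous h.isH1loc h.le_potential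
      (h.lagJ_eq.trans_ne hfin) hK hqK)
  have hgrad : gradient V ξ = 0 := eq_of_mapClusterPt_of_tendsto_comp hξ
    (continuous_gradient hV).continuousAt (h.tendsto_gradient_atTop hV hfin hK hqK hpos)
  exact ⟨mem_right_of_mapClusterPt hsplit hsep
    (h.eventually_mem_thickening_right hV.continuous hsplit hsep hK hqK) hVξ.le hξ, hVξ, hgrad⟩

theorem eventually_notMem_left (hV : Continuous V) (hsplit : {x | V x ≤ c} = Vm ∪ Vp)
    (hsep : 0 < setDist Vm Vp) (h : IsMinimizer V c Vm Vp q q') (hK : IsCompact K)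
    (hqK : ∀ t, q t ∈ K) : ∀ᶠ t in atTop, q t ∉ Vm :=
  (h.eventually_mem_thickening_right hV hsplit hsep hK hqK).mono fun _ ht htm =>
    disjoint_thickening_half_setDist.notMem_of_mem_left
      (self_subset_thickening (half_pos hsep) Vm htm) ht

theorem eventually_notMem_right (hV : Continuous V) (hsplit : {x | V x ≤ c} = Vm ∪ Vp)
    (hsep : 0 < setDist Vm Vp) (h : IsMinimizer V c Vm Vp q q') (hK : IsCompact K)
    (hqK : ∀ t, q t ∈ K) : ∀ᶠ t in atBot, q t ∉ Vp := by
  rw [← map_neg_atTop, eventually_map]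
  exact h.comp_neg.eventually_notMem_left hV (hsplit.trans (union_comm _ _))
    (setDist_comm Vm Vp ▸ hsep) hK fun t => hqK (-t)

end IsMinimizer

end MinimizerAsymptotics

section LimitSets

variable {N : ℕ} {V : Euc N → ℝ} {c : ℝ} {Vm Vp : Set (Euc N)} {q q' : ℝ → Euc N}

theorem alphaQ_lt_top (h : ∀ᶠ t in atTop, q t ∉ Vm) : alphaQ Vm q < ⊤ := by
  obtain ⟨T, hT⟩ := eventually_atTop.1 h
  refine lt_of_le_of_lt (sSup_le ?_) (EReal.coe_lt_top T)
  rintro _ ⟨t, rfl, ht⟩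
  exact EReal.coe_le_coe_iff.2 (le_of_not_ge fun hTt => hT t hTt ht)

theorem bot_lt_omegaQ (h : ∀ᶠ t in atBot, q t ∉ Vp) : ⊥ < omegaQ Vm Vp q := by
  obtain ⟨S, hS⟩ := eventually_atBot.1 h
  refine lt_of_lt_of_le (EReal.bot_lt_coe S) (le_sInf ?_)
  rintro _ ⟨t, rfl, -, ht⟩
  exact EReal.coe_le_coe_iff.2 (le_of_not_ge fun htS => hS t htS ht)

theorem notMem_left_of_alphaQ_lt {t : ℝ} (h : alphaQ Vm q < t) : q t ∉ Vm := fun ht =>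
  h.not_ge (le_sSup ⟨t, rfl, ht⟩)

theorem notMem_right_of_lt_omegaQ {t : ℝ} (hα : alphaQ Vm q < t) (hω : t < omegaQ Vm Vp q) :
    q t ∉ Vp := fun ht => hω.not_ge (sInf_le ⟨t, rfl, hα, ht⟩)

theorem omegaLimitSet_eq_setOf_mapClusterPt (h : alphaQ Vm q < ⊤) :
    omegaLimitSet Vm q = {ξ | MapClusterPt ξ atTop q} := by
  obtain ⟨a, ha, -⟩ := EReal.lt_iff_exists_real_btwn.1 h
  ext ξ
  simp only [omegaLimitSet, mem_iInter, mem_ofPred_eq, mapClusterPt_atTop_iff_forall_mem_closure]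
  refine ⟨fun hξ t => ?_, fun hξ t _ => hξ t⟩
  exact closure_mono (image_mono (Ici_subset_Ici.2 (le_max_right a t)))
    (hξ (max a t) (ha.trans_le (EReal.coe_le_coe_iff.2 (le_max_left a t))))

theorem alphaLimitSet_eq_setOf_mapClusterPt (h : ⊥ < omegaQ Vm Vp q) :
    alphaLimitSet Vm Vp q = {ξ | MapClusterPt ξ atBot q} := by
  obtain ⟨b, -, hb⟩ := EReal.lt_iff_exists_real_btwn.1 h
  ext ξ
  simp only [alphaLimitSet, mem_iInter, mem_ofPred_eq, MapClusterPt,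
    (atBot_basis.map q).clusterPt_iff_forall_mem_closure, forall_const]
  refine ⟨fun hξ t => ?_, fun hξ t _ => hξ t⟩
  exact closure_mono (image_mono (Iic_subset_Iic.2 (min_le_right b t)))
    (hξ (min b t) ((EReal.coe_le_coe_iff.2 (min_le_left b t)).trans_lt hb))

theorem lt_potential_of_notMem (hsplit : {x | V x ≤ c} = Vm ∪ Vp) {x : Euc N} (hm : x ∉ Vm)
    (hp : x ∉ Vp) : c < V x :=
  lt_of_not_ge fun hx => (hsplit.subset hx).elim hm hp

theorem eventually_lt_potential_atTop (hsplit : {x | V x ≤ c} = Vm ∪ Vp)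
    (hα : alphaQ Vm q < ⊤) (hω : omegaQ Vm Vp q = ⊤) : ∀ᶠ t in atTop, c < V (q t) := by
  obtain ⟨a, ha, -⟩ := EReal.lt_iff_exists_real_btwn.1 hα
  filter_upwards [eventually_ge_atTop a] with t ht
  have hαt : alphaQ Vm q < t := ha.trans_le (EReal.coe_le_coe_iff.2 ht)
  exact lt_potential_of_notMem hsplit (notMem_left_of_alphaQ_lt hαt)
    (notMem_right_of_lt_omegaQ hαt (hω ▸ EReal.coe_lt_top t))

theorem eventually_lt_potential_atBot (hsplit : {x | V x ≤ c} = Vm ∪ Vp)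
    (hα : alphaQ Vm q = ⊥) (hω : ⊥ < omegaQ Vm Vp q) : ∀ᶠ t in atBot, c < V (q t) := by
  obtain ⟨b, -, hb⟩ := EReal.lt_iff_exists_real_btwn.1 hω
  filter_upwards [eventually_le_atBot b] with t ht
  have hαt : alphaQ Vm q < t := hα ▸ EReal.bot_lt_coe t
  exact lt_potential_of_notMem hsplit (notMem_left_of_alphaQ_lt hαt)
    (notMem_right_of_lt_omegaQ hαt ((EReal.coe_le_coe_iff.2 ht).trans_lt hb))

theorem mapClusterPt_atTop_comp_neg {X : Type*} [TopologicalSpace X] {f : ℝ → X} {x : X} :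
    MapClusterPt x atTop (fun t => f (-t)) ↔ MapClusterPt x atBot f := by
  rw [← map_neg_atTop]
  exact mapClusterPt_comp

namespace IsMinimizer

theorem asymptotics_atTop (hV : ContDiff ℝ 1 V) (hsplit : {x | V x ≤ c} = Vm ∪ Vp)
    (hsep : 0 < setDist Vm Vp) (h : IsMinimizer V c Vm Vp q q') {K : Set (Euc N)}
    (hK : IsCompact K) (hqK : ∀ t, q t ∈ K) (hpos : ∀ᶠ t in atTop, c < V (q t)) :
    Tendsto (deriv q) atTop (𝓝 0) ∧ IsConnected {ξ | MapClusterPt ξ atTop q} ∧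
      {ξ | MapClusterPt ξ atTop q} ⊆ Vp ∩ {ξ | V ξ = c ∧ gradient V ξ = 0} :=
  ⟨h.tendsto_deriv_atTop hV (mc_ne_top hV.continuous hsplit hsep ⟨_, h.mem_Gamma⟩) hK hqK hpos,
    isConnected_setOf_mapClusterPt_atTop h.isH1loc.continuous hK (.of_forall hqK),
    h.setOf_mapClusterPt_subset hV hsplit hsep hK hqK hpos⟩

theorem asymptotics_atBot (hV : ContDiff ℝ 1 V) (hsplit : {x | V x ≤ c} = Vm ∪ Vp)
    (hsep : 0 < setDist Vm Vp) (h : IsMinimizer V c Vm Vp q q') {K : Set (Euc N)}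
    (hK : IsCompact K) (hqK : ∀ t, q t ∈ K) (hpos : ∀ᶠ t in atBot, c < V (q t)) :
    Tendsto (deriv q) atBot (𝓝 0) ∧ IsConnected {ξ | MapClusterPt ξ atBot q} ∧
      {ξ | MapClusterPt ξ atBot q} ⊆ Vm ∩ {ξ | V ξ = c ∧ gradient V ξ = 0} := by
  rw [← map_neg_atTop, eventually_map] at hpos
  obtain ⟨hderiv, hconn, hsub⟩ := h.comp_neg.asymptotics_atTop hV (hsplit.trans (union_comm _ _))
    (setDist_comm Vm Vp ▸ hsep) hK (fun t => hqK (-t)) hpos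
  simp only [mapClusterPt_atTop_comp_neg] at hconn hsub
  refine ⟨?_, hconn, hsub⟩
  have hneg : deriv q = fun t => -deriv (fun s => q (-s)) (-t) :=
    funext fun t => by rw [deriv_comp_neg, neg_neg, neg_neg]
  rw [hneg, ← neg_zero]
  exact (hderiv.comp tendsto_neg_atBot_atTop).neg

end IsMinimizer

end LimitSets

theorem minimizer_limit_sets_general {N : ℕ} {V : Euc N → ℝ} (hV : ContDiff ℝ 1 V) {c : ℝ}
    {Vm Vp : Set (Euc N)} (hsplit : {x | V x ≤ c} = Vm ∪ Vp) (hsep : 0 < setDist Vm Vp)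
    {R : ℝ} {q q' : ℝ → Euc N} (h : IsMinimizer V c Vm Vp q q') (hR : ∀ t, ‖q t‖ ≤ R) :
    (omegaQ Vm Vp q = ⊤ →
      Tendsto (deriv q) atTop (𝓝 0) ∧
      IsClosed (omegaLimitSet Vm q) ∧ IsConnected (omegaLimitSet Vm q) ∧
      omegaLimitSet Vm q ⊆ Vp ∩ {ξ | V ξ = c ∧ gradient V ξ = 0}) ∧
    (alphaQ Vm q = ⊥ →
      Tendsto (deriv q) atBot (𝓝 0) ∧
      IsClosed (alphaLimitSet Vm Vp q) ∧ IsConnected (alphaLimitSet Vm Vp q) ∧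
      alphaLimitSet Vm Vp q ⊆ Vm ∩ {ξ | V ξ = c ∧ gradient V ξ = 0}) := by
  have hK : IsCompact (closedBall (0 : Euc N) R) := isCompact_closedBall 0 R
  have hqK : ∀ t, q t ∈ closedBall 0 R := fun t => mem_closedBall_zero_iff.2 (hR t)
  have hα : alphaQ Vm q < ⊤ :=
    alphaQ_lt_top (h.eventually_notMem_left hV.continuous hsplit hsep hK hqK)
  have hω : ⊥ < omegaQ Vm Vp q :=
    bot_lt_omegaQ (h.eventually_notMem_right hV.continuous hsplit hsep hK hqK)
  rw [omegaLimitSet_eq_setOf_mapClusterPt hα, alphaLimitSet_eq_setOf_mapClusterPt hω]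
  refine ⟨fun hωtop => ?_, fun hαbot => ?_⟩
  · obtain ⟨hderiv, hlimit⟩ := h.asymptotics_atTop hV hsplit hsep hK hqK
      (eventually_lt_potential_atTop hsplit hα hωtop)
    exact ⟨hderiv, isClosed_setOfPred_clusterPt, hlimit⟩
  · obtain ⟨hderiv, hlimit⟩ := h.asymptotics_atBot hV hsplit hsep hK hqK
      (eventually_lt_potential_atBot hsplit hαbot hω)
    exact ⟨hderiv, isClosed_setOfPred_clusterPt, hlimit⟩

/-- Lemma 2.11 (limit sets): when the connecting time interval of a minimizer is unbounded,
the derivative vanishes at infinity and the corresponding limit set consists of critical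
points of `V` at level `c`. -/
theorem minimizer_limit_sets {N : ℕ} (hN : 0 < N) (V : Euc N → ℝ) (hV : ContDiff ℝ 1 V)
    (c : ℝ) (Vm Vp : Set (Euc N)) (hVm : IsClosed Vm) (hVp : IsClosed Vp)
    (hsplit : {x | V x ≤ c} = Vm ∪ Vp) (hsep : 0 < setDist Vm Vp)
    (R : ℝ) (hR : 0 < R) (hcoer : Coercive V c Vm Vp R)
    (q q' : ℝ → Euc N) (hq : MemM V c Vm Vp R q q') :
    (omegaQ Vm Vp q = ⊤ →
      Tendsto (deriv q) atTop (𝓝 0) ∧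
      IsClosed (omegaLimitSet Vm q) ∧ IsConnected (omegaLimitSet Vm q) ∧
      omegaLimitSet Vm q ⊆ Vp ∩ {ξ | V ξ = c ∧ gradient V ξ = 0}) ∧
    (alphaQ Vm q = ⊥ →
      Tendsto (deriv q) atBot (𝓝 0) ∧
      IsClosed (alphaLimitSet Vm Vp q) ∧ IsConnected (alphaLimitSet Vm Vp q) ∧
      alphaLimitSet Vm Vp q ⊆ Vm ∩ {ξ | V ξ = c ∧ gradient V ξ = 0}) :=
  minimizer_limit_sets_general hV hsplit hsep ⟨hq.1, hq.2.2.1⟩ hq.2.2.2
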